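/- Ekeland's variational principle: Let (E, d) be a complete metric space and let f : E → ℝ ∪ {+∞} be a lower semicontinuous function that is bounded from below and not identically +∞. Given ε > 0, suppose u_ε ∈ E satisfies f(u_ε) ≤ inf_{x ∈ E} f(x) + ε. Then for any λ > 0 there exists v ∈ E such that: (1) f(v) ≤ f(u_ε); (2) d(u_ε, v) ≤ λ; and (3) for every w ≠ v, f(v) < f(w) + (ε/λ) d(v, w). -/

import Mathlib

/-!
Order `E` by letting `w` lie above `x` when `f w + k * dist x w ≤ f x`, with `k = ε / λ`. Starting
from `u`, repeatedly move to a point above the current one at which `f` is almost minimal among the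
points above: everything above the new point is then close to it. Hence the sets of points above
the iterates are closed, nested and of diameter tending to `0`, and their common point `v` is
maximal, which is the strict inequality. The distance bound holds because `f` can drop by at most
`ε` from `u`.
-/

open Filter Metric Topology

section SetValued

variable {α : Type*} {S : α → Set α}

theorem exists_seq_antitone_subset_closedBall [PseudoMetricSpace α]
    (htrans : ∀ x, ∀ y ∈ S x, S y ⊆ S x) {x₀ : α} (hx₀ : x₀ ∈ S x₀)
    (hsmall : ∀ x ∈ S x₀, ∀ δ > 0, ∃ y ∈ S x, S y ⊆ closedBall y δ)
    {δ : ℕ → ℝ} (hδ : ∀ n, 0 < δ n) :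
    ∃ x : ℕ → α, (∀ n, x n ∈ S x₀) ∧ Antitone (fun n => S (x n)) ∧
      ∀ n, S (x n) ⊆ closedBall (x n) (δ n) := by
  have : Nonempty α := ⟨x₀⟩
  choose! next hnext hball using hsmall
  let y : ℕ → α := fun n => Nat.rec x₀ (fun n x => next x (δ n)) n
  have hy : ∀ n, y n ∈ S x₀ := by
    intro n
    induction n with
    | zero => exact hx₀
    | succ n ih => exact htrans x₀ _ ih (hnext _ ih _ (hδ n))
  have hanti : Antitone fun n => S (y n) :=
    antitone_nat_of_succ_le fun n => htrans _ _ (hnext _ (hy n) _ (hδ n))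
  exact ⟨fun n => y (n + 1), fun n => hy (n + 1),
    fun _ _ hmn => hanti (Nat.succ_le_succ hmn), fun n => hball _ (hy n) _ (hδ n)⟩

-- A form of the Dancs–Hegedüs–Medvegyev theorem.
theorem exists_mem_eq_singleton_of_subset_closedBall [MetricSpace α] [CompleteSpace α]
    (hclosed : ∀ x, IsClosed (S x)) (hrefl : ∀ x, x ∈ S x)
    (htrans : ∀ x, ∀ y ∈ S x, S y ⊆ S x) {x₀ : α}
    (hsmall : ∀ x ∈ S x₀, ∀ δ > 0, ∃ y ∈ S x, S y ⊆ closedBall y δ) :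
    ∃ v ∈ S x₀, S v = {v} := by
  obtain ⟨x, hx₀, hanti, hball⟩ := exists_seq_antitone_subset_closedBall htrans (hrefl x₀) hsmall
    (δ := fun n => 1 / ((n : ℝ) + 1)) fun _ => Nat.one_div_pos_of_nat
  have hδ : Tendsto (fun n : ℕ => 1 / ((n : ℝ) + 1)) atTop (𝓝 0) :=
    tendsto_one_div_add_atTop_nhds_zero_nat
  have hmem : ∀ n m, n ≤ m → x m ∈ S (x n) := fun n m hnm => hanti hnm (hrefl (x m))
  have hcauchy : CauchySeq x :=
    cauchySeq_of_le_tendsto_0' _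
      (fun n m hnm => mem_closedBall'.1 (hball n (hmem n m hnm))) hδ
  obtain ⟨v, hv⟩ := cauchySeq_tendsto_of_complete hcauchy
  have hvS : ∀ n, v ∈ S (x n) := fun n =>
    (hclosed (x n)).mem_of_tendsto hv ((eventually_ge_atTop n).mono (hmem n))
  refine ⟨v, htrans x₀ (x 0) (hx₀ 0) (hvS 0), Set.eq_singleton_iff_unique_mem.2 ⟨hrefl v, ?_⟩⟩
  intro w hw
  have hxw : Tendsto x atTop (𝓝 w) :=
    tendsto_iff_dist_tendsto_zero.2 <| squeeze_zero (fun _ => dist_nonneg)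
      (fun n => mem_closedBall'.1 (hball n (htrans _ v (hvS n) hw))) hδ
  exact tendsto_nhds_unique hxw hv

end SetValued

theorem exists_mem_forall_mem_le_add {ι : Type*} {f : ι → EReal} {s : Set ι}
    (hbot : (⨅ i ∈ s, f i) ≠ ⊥) (htop : (⨅ i ∈ s, f i) ≠ ⊤) {η : ℝ} (hη : 0 < η) :
    ∃ i ∈ s, ∀ j ∈ s, f i ≤ f j + (η : EReal) := by
  have hlt : ⨅ i ∈ s, f i < (⨅ i ∈ s, f i) + (η : EReal) := by
    lift ⨅ i ∈ s, f i to ℝ using ⟨htop, hbot⟩ with m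
    exact_mod_cast lt_add_of_pos_right m hη
  obtain ⟨i, hi, hfi⟩ := lt_biInf_iff.1 hlt
  exact ⟨i, hi, fun j hj => hfi.le.trans (by gcongr; exact iInf₂_le j hj)⟩

section EkelandSet

variable {E : Type*} {f : E → EReal} {k : ℝ}

/-- The set of points `w` above `x` in the Ekeland order of slope `k`: moving from `x` to `w` lowers
`f` by at least `k * dist x w`. The inequality is written without subtraction, so that it is
meaningful in `EReal`. -/
def ekelandSet [PseudoMetricSpace E] (f : E → EReal) (k : ℝ) (x : E) : Set E :=
  {w | f w + ((k * dist x w : ℝ) : EReal) ≤ f x}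

section PseudoMetric

variable [PseudoMetricSpace E]

theorem self_mem_ekelandSet (x : E) : x ∈ ekelandSet f k x := by
  simp [ekelandSet]

theorem le_of_mem_ekelandSet (hk : 0 ≤ k) {x w : E} (hw : w ∈ ekelandSet f k x) : f w ≤ f x :=
  (le_add_of_nonneg_right (EReal.coe_nonneg.2 (by positivity))).trans hw

theorem ekelandSet_subset_of_mem (hk : 0 ≤ k) {x y : E} (hy : y ∈ ekelandSet f k x) :
    ekelandSet f k y ⊆ ekelandSet f k x := by
  intro z hz
  have hdist : k * dist x z ≤ k * dist y z + k * dist x y := by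
    rw [← mul_add, add_comm]
    gcongr
    exact dist_triangle x y z
  calc f z + ((k * dist x z : ℝ) : EReal)
      ≤ f z + ((k * dist y z + k * dist x y : ℝ) : EReal) := by gcongr
    _ = f z + ((k * dist y z : ℝ) : EReal) + ((k * dist x y : ℝ) : EReal) := by
      rw [EReal.coe_add, add_assoc]
    _ ≤ f y + ((k * dist x y : ℝ) : EReal) := by gcongr; exact hz
    _ ≤ f x := hy

theorem isClosed_ekelandSet (hf : LowerSemicontinuous f) (x : E) :
    IsClosed (ekelandSet f k x) := by
  have hcont : Continuous fun w => ((k * dist x w : ℝ) : EReal) :=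
    continuous_coe_real_ereal.comp (by fun_prop)
  have hsum : LowerSemicontinuous fun w => f w + ((k * dist x w : ℝ) : EReal) :=
    hf.add' hcont.lowerSemicontinuous fun _ =>
      EReal.continuousAt_add (.inr (EReal.coe_ne_bot _)) (.inr (EReal.coe_ne_top _))
  exact hsum.isClosed_preimage (f x)

theorem mul_dist_le_of_mem_ekelandSet {x w : E} {η : ℝ} (hbot : f w ≠ ⊥) (htop : f w ≠ ⊤)
    (hw : w ∈ ekelandSet f k x) (hx : f x ≤ f w + (η : EReal)) : k * dist x w ≤ η := by
  have hle : f w + ((k * dist x w : ℝ) : EReal) ≤ f w + (η : EReal) := hw.trans hx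
  lift f w to ℝ using ⟨htop, hbot⟩ with a
  norm_cast at hle
  linarith

theorem exists_mem_ekelandSet_subset_closedBall (hk : 0 < k) (hinf : (⨅ x, f x) ≠ ⊥) {x : E}
    (hx : f x ≠ ⊤) {δ : ℝ} (hδ : 0 < δ) :
    ∃ y ∈ ekelandSet f k x, ekelandSet f k y ⊆ closedBall y δ := by
  have hbot : (⨅ w ∈ ekelandSet f k x, f w) ≠ ⊥ :=
    ne_bot_of_le_ne_bot hinf (iInf_le_iInf₂ _ f)
  have htop : (⨅ w ∈ ekelandSet f k x, f w) ≠ ⊤ :=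
    ne_top_of_le_ne_top hx (iInf₂_le x (self_mem_ekelandSet x))
  obtain ⟨y, hy, hymin⟩ := exists_mem_forall_mem_le_add hbot htop (mul_pos hk hδ)
  refine ⟨y, hy, fun w hw => mem_closedBall'.2 (le_of_mul_le_mul_left ?_ hk)⟩
  have hwx : w ∈ ekelandSet f k x := ekelandSet_subset_of_mem hk.le hy hw
  exact mul_dist_le_of_mem_ekelandSet (ne_bot_of_le_ne_bot hinf (iInf_le f w))
    (ne_top_of_le_ne_top hx (le_of_mem_ekelandSet hk.le hwx)) hw (hymin w hwx)

end PseudoMetric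

theorem exists_mem_ekelandSet_eq_singleton [MetricSpace E] [CompleteSpace E]
    (hf : LowerSemicontinuous f) (hinf : (⨅ x, f x) ≠ ⊥) (hk : 0 < k) {u : E} (hu : f u ≠ ⊤) :
    ∃ v ∈ ekelandSet f k u, ekelandSet f k v = {v} :=
  exists_mem_eq_singleton_of_subset_closedBall (isClosed_ekelandSet hf) self_mem_ekelandSet
    (fun _ _ => ekelandSet_subset_of_mem hk.le) fun _ hx _ =>
      exists_mem_ekelandSet_subset_closedBall hk hinf
        (ne_top_of_le_ne_top hu (le_of_mem_ekelandSet hk.le hx))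

end EkelandSet

/-- Ekeland's variational principle: on a complete metric space `E`, if
`f : E → ℝ ∪ {+∞}` (modelled as `EReal`-valued, never `⊥`) is lower
semicontinuous, bounded below by a real constant, and not identically `+∞`,
and `u` is an `ε`-approximate minimizer, then for any `λ > 0` there is `v`
with `f v ≤ f u`, `d(u, v) ≤ λ`, and `f v < f w + (ε/λ) d(v, w)` for all
`w ≠ v`. -/
theorem ekeland_variational_principle
    {E : Type*} [MetricSpace E] [CompleteSpace E]
    (f : E → EReal) (hlsc : LowerSemicontinuous f)
    (hbdd : ∃ c : ℝ, ∀ x : E, (c : EReal) ≤ f x)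
    (hfin : ∃ x : E, f x ≠ ⊤)
    (ε : ℝ) (hε : 0 < ε) (u : E)
    (hu : f u ≤ (⨅ x : E, f x) + (ε : EReal))
    (lam : ℝ) (hlam : 0 < lam) :
    ∃ v : E, f v ≤ f u ∧ dist u v ≤ lam ∧
      ∀ w : E, w ≠ v → f v < f w + ((ε / lam * dist v w : ℝ) : EReal) := by
  have hk : 0 < ε / lam := div_pos hε hlam
  obtain ⟨c, hc⟩ := hbdd
  obtain ⟨x₀, hx₀⟩ := hfin
  have hbot : (⨅ x, f x) ≠ ⊥ := ne_bot_of_le_ne_bot (EReal.coe_ne_bot c) (le_iInf hc)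
  have hu_le (x : E) : f u ≤ f x + (ε : EReal) := hu.trans (by gcongr; exact iInf_le f x)
  have hu_top : f u ≠ ⊤ :=
    ne_top_of_le_ne_top (EReal.add_ne_top hx₀ (EReal.coe_ne_top ε)) (hu_le x₀)
  obtain ⟨v, hvu, hv⟩ := exists_mem_ekelandSet_eq_singleton hlsc hbot hk hu_top
  have hvu_le : f v ≤ f u := le_of_mem_ekelandSet hk.le hvu
  refine ⟨v, hvu_le, ?_, fun w hwv => ?_⟩
  · have hdist : ε / lam * dist u v ≤ ε :=
      mul_dist_le_of_mem_ekelandSet (ne_bot_of_le_ne_bot hbot (iInf_le f v))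
        (ne_top_of_le_ne_top hu_top hvu_le) hvu (hu_le v)
    exact le_of_mul_le_mul_left (hdist.trans_eq (div_mul_cancel₀ ε hlam.ne').symm) hk
  · have hw : w ∉ ekelandSet f (ε / lam) v := by rwa [hv, Set.mem_singleton_iff]
    exact not_le.1 hw
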